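/- Let T be a tree with exactly three pendant vertices u1, u2, u3 and a major vertex m such that d(u1,m) ≡ 0 mod 3, d(u2,m) ≡ 2 mod 3, and d(u3,m) ≡ 0 mod 3. Then there exists an eigenvector x of the Laplacian matrix L(T) corresponding to the eigenvalue 1 such that for every k ∈ {1,2,3} and every vertex v on the path P_{u_k,m} from u_k to m, if d(v,u_k) ≡ 1 mod 3 then x(v) = 0. -/

import Mathlib

/-!
The eigenvector is explicit. Let `f : ℕ → ℝ` be the `6`-periodic sequence
`1, 1, 0, -1, -1, 0, …`, which satisfies `f n + f (n + 2) = f (n + 1)` and vanishes exactly at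
`n ≡ 2 (mod 3)`. Put `x v = f (d(m, v) + 1)` on the path from `u₂` to `m` and `x v = f (d(m, v))`
everywhere else; the two formulas agree at `m`, because `f 0 = f 1`.

Since the degrees of a tree on `n` vertices sum to `2 (n - 1)`, having three leaves and a vertex
`m` of degree at least three forces `deg m = 3` and `deg v = 2` at every other non-leaf
(`ncard_neighborSet_of_three_pendant`). So a vertex other than `m` has one neighbour nearer to `m`
and, unless it is a leaf, exactly one farther neighbour, and membership in the `u₂`-leg is
preserved along every edge avoiding `m` (`onPath_of_adj`). The eigenvalue equation then reads
* at a degree-two vertex: the recurrence of `f`;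
* at a leaf: vanishing of `x` at its neighbour, which is what the congruences on the leg lengths say;
* at `m`: `3 · 1 - (f 2 + f 1 + f 1) = 1`, exactly one neighbour of `m` being on the `u₂`-leg.

The zero condition follows from `f n = 0` for `n ≡ 2 (mod 3)`, once it is known that the other two
legs meet the `u₂`-leg only in `m` (`not_onPath_of_onPath`).
-/

open SimpleGraph Matrix

variable {V : Type*}

/-- A pendant vertex: a vertex of degree one. -/
def IsPendant (G : SimpleGraph V) (v : V) : Prop := (G.neighborSet v).ncard = 1

/-- A major vertex: a vertex of degree at least three. -/
def IsMajor (G : SimpleGraph V) (v : V) : Prop := 3 ≤ (G.neighborSet v).ncard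

/-- `v` lies on the (unique, in a tree) path between `u` and `w`. -/
def OnPath (G : SimpleGraph V) (u w v : V) : Prop :=
  G.dist u v + G.dist v w = G.dist u w

/-- The number of pendant vertices of a graph. -/
noncomputable def numPendant (G : SimpleGraph V) : ℕ :=
  Nat.card {v : V // IsPendant G v}

/-- The Laplacian matrix `D - A` over `ℝ`. -/
noncomputable def lapMat [Fintype V] (G : SimpleGraph V) : Matrix V V ℝ :=
  letI := Classical.decEq V
  letI : DecidableRel G.Adj := Classical.decRel _
  G.lapMatrix ℝ

/-- The signless Laplacian matrix `D + A` over `ℝ`. -/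
noncomputable def signlessLapMat [Fintype V] (G : SimpleGraph V) : Matrix V V ℝ :=
  letI := Classical.decEq V
  letI : DecidableRel G.Adj := Classical.decRel _
  G.degMatrix ℝ + G.adjMatrix ℝ

/-- The multiplicity of `μ` as an eigenvalue of the Laplacian matrix of `G`. -/
noncomputable def lapMult [Finite V] (G : SimpleGraph V) (μ : ℝ) : ℕ :=
  letI := Fintype.ofFinite V
  letI := Classical.decEq V
  Module.finrank ℝ (Module.End.eigenspace (Matrix.toLin' (lapMat G)) μ)

/-- `μ` is an eigenvalue of the Laplacian matrix of `G`. -/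
def HasLapEigen [Finite V] (G : SimpleGraph V) (μ : ℝ) : Prop :=
  letI := Fintype.ofFinite V
  ∃ x : V → ℝ, x ≠ 0 ∧ lapMat G *ᵥ x = μ • x

/-- Membership in the class `𝒬`: a tree in which any two distinct pendant vertices are
at distance `≡ 2 (mod 3)`. -/
def InQ [Finite V] (G : SimpleGraph V) : Prop :=
  G.IsTree ∧ ∀ u v : V, IsPendant G u → IsPendant G v → u ≠ v → G.dist u v % 3 = 2

/-- A node of a tree: a vertex at distance `≡ 1 (mod 3)` from every pendant vertex. -/
def IsNode (G : SimpleGraph V) (η : V) : Prop :=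
  ∀ u : V, IsPendant G u → G.dist η u % 3 = 1

/-- Membership in the class `𝒫`: a path on `n` vertices with `n ≡ 2 (mod 3)`. -/
def InP [Finite V] (G : SimpleGraph V) : Prop :=
  G.IsTree ∧ (∀ v : V, (G.neighborSet v).ncard ≤ 2) ∧ Nat.card V % 3 = 2

/-- The induced subgraph on `S` is a tree of class `𝒬` and `b ∈ S` is a node of it. -/
def NodeAttach [Finite V] (T : SimpleGraph V) (S : Set V) (b : V) : Prop :=
  ∃ hb : b ∈ S, InQ (T.induce S) ∧ IsNode (T.induce S) ⟨b, hb⟩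

/-- The induced subgraph on `S` is a path of class `𝒫` and `b ∈ S` is a pendant vertex
of it. -/
def PendantAttach [Finite V] (T : SimpleGraph V) (S : Set V) (b : V) : Prop :=
  ∃ hb : b ∈ S, InP (T.induce S) ∧ IsPendant (T.induce S) ⟨b, hb⟩

/-- The tree `T` is obtained from a tree `H` consisting of three internally disjoint
paths `P_{u j, m}` (`j = 0,1,2`) joined at `m`, whose three leg lengths satisfy `cond`,
together with trees `T i` (`i : Fin k`) of class `𝒬 ∪ 𝒫` (realized as the induced
subgraphs on the sets `S i`), by identifying for each `i` a vertex `a i` of `H`, lying on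
some `P_{u j, m}` with `d(a i, u j) ≡ 1 (mod 3)`, with a vertex `b i` of `T i` which is a
node of `T i` if `T i ∈ 𝒬` and a pendant vertex of `T i` if `T i ∈ 𝒫`. -/
def InGammaWith [Finite V] (T : SimpleGraph V) (cond : ℕ → ℕ → ℕ → Prop) : Prop :=
  ∃ (m : V) (u : Fin 3 → V) (k : ℕ) (a : Fin k → V) (S : Fin k → Set V),
    T.IsTree ∧
    Function.Injective u ∧
    (∀ j, u j ≠ m) ∧
    (∀ j j', j ≠ j' → ∀ v, OnPath T (u j) m v → OnPath T (u j') m v → v = m) ∧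
    cond (T.dist (u 0) m) (T.dist (u 1) m) (T.dist (u 2) m) ∧
    (∀ i, ∃ j, OnPath T (u j) m (a i) ∧ T.dist (a i) (u j) % 3 = 1) ∧
    (∀ i, S i ∩ {v | ∃ j, OnPath T (u j) m v} = {a i}) ∧
    (∀ i i', i ≠ i' → ∀ v ∈ S i ∩ S i', v = a i ∧ v = a i') ∧
    (∀ v, (∃ j, OnPath T (u j) m v) ∨ ∃ i, v ∈ S i) ∧
    (∀ v w, T.Adj v w →
      ((∃ j, OnPath T (u j) m v) ∧ (∃ j, OnPath T (u j) m w)) ∨ ∃ i, v ∈ S i ∧ w ∈ S i) ∧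
    (∀ i, NodeAttach T (S i) (a i) ∨ PendantAttach T (S i) (a i))

/-- The class `Γ_A`: base tree in `Ω_A`. -/
def InGammaA [Finite V] (T : SimpleGraph V) : Prop :=
  InGammaWith T (fun d₁ d₂ d₃ => d₁ % 3 = 1 ∧ d₂ % 3 = 1 ∧ d₃ % 3 ≠ 1)

/-- The class `Γ_B`: base tree in `Ω_B`. -/
def InGammaB [Finite V] (T : SimpleGraph V) : Prop :=
  InGammaWith T (fun d₁ d₂ d₃ => d₁ % 3 = 2 ∧ d₂ % 3 = 0 ∧ d₃ % 3 = 0)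

/-- The class `Γ = Γ_A ∪ Γ_B`. -/
def InGamma [Finite V] (T : SimpleGraph V) : Prop := InGammaA T ∨ InGammaB T

/-! ### The sequence along a leg and the action of the Laplacian -/

/-- The `6`-periodic sequence `1, 1, 0, -1, -1, 0, …`. -/
noncomputable def legSeq (n : ℕ) : ℝ :=
  if n % 6 ≤ 1 then 1 else if n % 3 = 2 then 0 else -1

lemma legSeq_rec (n : ℕ) : legSeq n + legSeq (n + 2) = legSeq (n + 1) := by
  unfold legSeq
  have h : n % 6 = 0 ∨ n % 6 = 1 ∨ n % 6 = 2 ∨ n % 6 = 3 ∨ n % 6 = 4 ∨ n % 6 = 5 := by omega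
  rcases h with h | h | h | h | h | h <;> split_ifs <;> first | omega | norm_num

lemma legSeq_eq_zero {n : ℕ} (h : n % 3 = 2) : legSeq n = 0 := by
  unfold legSeq
  rw [if_neg (by omega), if_pos h]

/-- The Laplacian acts by `(L x)(v) = deg(v) x(v) - ∑_{w ~ v} x(w)`, where the neighbours of `v`
are listed by any finset `S`. -/
lemma lapMat_mulVec_apply {V : Type*} [Fintype V] (T : SimpleGraph V) (x : V → ℝ) (v : V)
    (S : Finset V) (hS : ∀ w, w ∈ S ↔ T.Adj v w) :
    (lapMat T *ᵥ x) v = S.card * x v - ∑ w ∈ S, x w := by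
  let _ := Classical.decEq V
  let _ : DecidableRel T.Adj := Classical.decRel _
  have hS' : S = T.neighborFinset v := by
    ext w; simp [hS]
  subst hS'
  rw [T.card_neighborFinset_eq_degree]
  exact T.lapMatrix_mulVec_apply v x

/-! ### Distances and degrees in a tree -/

lemma exists_closer {V : Type*} {T : SimpleGraph V} (hT : T.IsTree) {r v : V} (h : v ≠ r) :
    ∃ w, T.Adj v w ∧ T.dist r v = T.dist r w + 1 := by
  obtain ⟨p, hp⟩ := hT.connected.exists_walk_length_eq_dist v r
  cases p with
  | nil => exact absurd rfl h
  | @cons _ w _ hadj q =>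
    refine ⟨w, hadj, ?_⟩
    have h1 : T.dist w r ≤ q.length := SimpleGraph.dist_le q
    rw [SimpleGraph.Walk.length_cons, T.dist_comm] at hp
    rw [T.dist_comm] at h1
    have := hT.dist_eq_dist_add_one_of_adj r hadj
    omega

lemma closer_unique {V : Type*} {T : SimpleGraph V} (hT : T.IsTree) {r v w w' : V}
    (h : T.Adj v w) (h' : T.Adj v w') (hd : T.dist r v = T.dist r w + 1)
    (hd' : T.dist r v = T.dist r w' + 1) : w = w' := by
  obtain ⟨p, hp⟩ := hT.connected.exists_walk_length_eq_dist w r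
  obtain ⟨q, hq⟩ := hT.connected.exists_walk_length_eq_dist w' r
  have h1 : (SimpleGraph.Walk.cons h p).IsPath :=
    SimpleGraph.Walk.isPath_of_length_eq_dist _
      (by rw [SimpleGraph.Walk.length_cons, hp, T.dist_comm, ← hd, T.dist_comm])
  have h2 : (SimpleGraph.Walk.cons h' q).IsPath :=
    SimpleGraph.Walk.isPath_of_length_eq_dist _
      (by rw [SimpleGraph.Walk.length_cons, hq, T.dist_comm, ← hd', T.dist_comm])
  have := (hT.existsUnique_path v r).unique h1 h2
  simpa using congrArg SimpleGraph.Walk.snd this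

/-- In a tree with exactly three leaves, a vertex of degree at least three has degree exactly three
and all remaining vertices have degree two: the degree excesses `deg v - 2` sum to `-2`. -/
lemma ncard_neighborSet_of_three_pendant {V : Type*} [Fintype V] {T : SimpleGraph V}
    (hT : T.IsTree) {u₁ u₂ u₃ m : V} (h12 : u₁ ≠ u₂) (h13 : u₁ ≠ u₃) (h23 : u₂ ≠ u₃)
    (h₁ : IsPendant T u₁) (h₂ : IsPendant T u₂) (h₃ : IsPendant T u₃)
    (hpend : ∀ w : V, IsPendant T w → w ∈ ({u₁, u₂, u₃} : Set V)) (hm : IsMajor T m) :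
    (T.neighborSet m).ncard = 3 ∧
      ∀ v, v ≠ m → v ≠ u₁ → v ≠ u₂ → v ≠ u₃ → (T.neighborSet v).ncard = 2 := by
  classical
  have hdeg : ∀ v, (T.neighborSet v).ncard = T.degree v := fun v => by
    rw [Set.ncard_eq_toFinset_card', ← T.card_neighborFinset_eq_degree]; rfl
  unfold IsPendant at h₁ h₂ h₃ hpend
  unfold IsMajor at hm
  simp only [hdeg] at *
  have m1 : u₁ ≠ m := by rintro rfl; omega
  have m2 : u₂ ≠ m := by rintro rfl; omega
  have m3 : u₃ ≠ m := by rintro rfl; omega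
  have : Nontrivial V := ⟨u₁, u₂, h12⟩
  have hpos : ∀ v, 0 < T.degree v := fun v => hT.connected.preconnected.degree_pos_of_nontrivial v
  let g : V → ℤ := fun v => T.degree v - 2 + (if v = u₁ then 1 else 0) + (if v = u₂ then 1 else 0)
    + (if v = u₃ then 1 else 0) - (if v = m then 1 else 0)
  have hg : ∀ v, 0 ≤ g v := by
    intro v
    have hp := hpos v
    have hq := hpend v
    simp only [Set.mem_insert_iff, Set.mem_singleton_iff] at hq
    simp only [g]
    by_cases e1 : v = u₁
    · subst e1
      rw [if_pos rfl, if_neg h12, if_neg h13, if_neg m1]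
      omega
    by_cases e2 : v = u₂
    · subst e2
      rw [if_neg e1, if_pos rfl, if_neg h23, if_neg m2]
      omega
    by_cases e3 : v = u₃
    · subst e3
      rw [if_neg e1, if_neg e2, if_pos rfl, if_neg m3]
      omega
    rw [if_neg e1, if_neg e2, if_neg e3]
    have hne : T.degree v ≠ 1 := fun h => by have := hq h; tauto
    split_ifs with e4
    · subst e4
      omega
    · omega
  have hsum : ∑ v, g v = 0 := by
    have e1 := hT.card_edgeFinset
    have e2 := T.sum_degrees_eq_twice_card_edges
    have e3 : ∑ v, (T.degree v : ℤ) = 2 * (T.edgeFinset.card : ℤ) := by exact_mod_cast e2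
    have e4 : (T.edgeFinset.card : ℤ) + 1 = Fintype.card V := by exact_mod_cast e1
    simp only [g, Finset.sum_add_distrib, Finset.sum_sub_distrib, Finset.sum_ite_eq',
      Finset.mem_univ, if_true, e3, Finset.sum_const, Finset.card_univ, nsmul_eq_mul]
    linarith
  have hz : ∀ v, g v = 0 := fun v =>
    (Finset.sum_eq_zero_iff_of_nonneg (fun v _ => hg v)).1 hsum v (Finset.mem_univ v)
  constructor
  · have := hz m
    simp only [g, if_neg m1.symm, if_neg m2.symm, if_neg m3.symm, if_true] at this
    omega
  · intro v a b c d
    have := hz v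
    simp only [g, if_neg a, if_neg b, if_neg c, if_neg d] at this
    omega

/-! ### Legs of the tree -/

lemma onPath_end {V : Type*} (T : SimpleGraph V) (u m : V) : OnPath T u m m := by
  simp [OnPath]

lemma onPath_start {V : Type*} (T : SimpleGraph V) (u m : V) : OnPath T u m u := by
  simp [OnPath]

lemma onPath_closer {V : Type*} {T : SimpleGraph V} (hT : T.IsTree) {u m v w : V}
    (hv : OnPath T u m v) (hadj : T.Adj v w) (hd : T.dist m v = T.dist m w + 1) :
    OnPath T u m w := by
  unfold OnPath at *
  have := hT.dist_eq_dist_add_one_of_adj u hadj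
  have h2 : T.dist u m ≤ T.dist u w + T.dist w m := hT.connected.dist_triangle
  have c1 : T.dist v m = T.dist m v := T.dist_comm
  have c2 : T.dist w m = T.dist m w := T.dist_comm
  omega

/-- A vertex of the path from `u` to `m` other than `u` has a neighbour on this path farther
from `m`. -/
lemma exists_farther {V : Type*} {T : SimpleGraph V} (hT : T.IsTree) {u m v : V}
    (hv : OnPath T u m v) (hu : v ≠ u) :
    ∃ w, T.Adj v w ∧ T.dist m w = T.dist m v + 1 ∧ OnPath T u m w ∧
      T.dist u v = T.dist u w + 1 := by
  obtain ⟨w, hadj, hd⟩ := exists_closer hT hu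
  refine ⟨w, hadj, ?_⟩
  unfold OnPath at *
  have := hT.dist_eq_dist_add_one_of_adj m hadj
  have h2 : T.dist u m ≤ T.dist u w + T.dist w m := hT.connected.dist_triangle
  have c1 : T.dist v m = T.dist m v := T.dist_comm
  have c2 : T.dist w m = T.dist m w := T.dist_comm
  omega

lemma pendant_unique {V : Type*} {T : SimpleGraph V} {u w w' : V} (h : IsPendant T u)
    (hw : T.Adj u w) (hw' : T.Adj u w') : w = w' := by
  obtain ⟨a, ha⟩ := Set.ncard_eq_one.1 h
  have h1 : w ∈ T.neighborSet u := hw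
  have h2 : w' ∈ T.neighborSet u := hw'
  rw [ha] at h1 h2
  exact h1.trans h2.symm

/-- The neighbour of a leaf `v ≠ m` is nearer to `m`. -/
lemma pendant_closer {V : Type*} {T : SimpleGraph V} (hT : T.IsTree) {m v w : V}
    (h : IsPendant T v) (hm : v ≠ m) (hw : T.Adj v w) : T.dist m v = T.dist m w + 1 := by
  obtain ⟨p, hp, hd⟩ := exists_closer hT hm
  rwa [pendant_unique h hw hp]

/-- A leaf on the path from `u` to `m` is one of its two ends. -/
lemma pendant_onPath {V : Type*} {T : SimpleGraph V} (hT : T.IsTree) {u m v : V}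
    (h : IsPendant T v) (hm : v ≠ m) (hv : OnPath T u m v) : v = u := by
  by_contra hu
  obtain ⟨w, hadj, hd, -⟩ := exists_farther hT hv hu
  have := pendant_closer hT h hm hadj
  omega

/-- A vertex with two neighbours has at most one neighbour farther from `m`. -/
lemma farther_unique {V : Type*} {T : SimpleGraph V} (hT : T.IsTree) {m v c c' : V}
    (h2 : (T.neighborSet v).ncard = 2) (hm : v ≠ m) (hc : T.Adj v c) (hc' : T.Adj v c')
    (hd : T.dist m c = T.dist m v + 1) (hd' : T.dist m c' = T.dist m v + 1) : c = c' := by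
  obtain ⟨p, hp, hpd⟩ := exists_closer hT hm
  obtain ⟨a, b, -, hab⟩ := Set.ncard_eq_two.1 h2
  have e1 : c ∈ T.neighborSet v := hc
  have e2 : c' ∈ T.neighborSet v := hc'
  have e3 : p ∈ T.neighborSet v := hp
  rw [hab] at e1 e2 e3
  have n1 : c ≠ p := by rintro rfl; omega
  have n2 : c' ≠ p := by rintro rfl; omega
  simp only [Set.mem_insert_iff, Set.mem_singleton_iff] at e1 e2 e3
  grind

/-- Membership in the leg from the leaf `u` to `m` propagates along edges starting outside `m`, as
every vertex other than `m` is a leaf or has degree two. -/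
lemma onPath_of_adj {V : Type*} {T : SimpleGraph V} (hT : T.IsTree) {u m v w : V}
    (hu : IsPendant T u) (hdeg : ∀ v, v ≠ m → IsPendant T v ∨ (T.neighborSet v).ncard = 2)
    (hv : OnPath T u m v) (hvm : v ≠ m) (hadj : T.Adj v w) : OnPath T u m w := by
  rcases hT.dist_eq_dist_add_one_of_adj m hadj with h | h
  · exact onPath_closer hT hv hadj h
  · have hnp : ¬ IsPendant T v := fun hp => by
      have := pendant_closer hT hp hvm hadj
      omega
    have h2 := (hdeg v hvm).resolve_left hnp
    have hvu : v ≠ u := fun e => hnp (e ▸ hu)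
    obtain ⟨c, hc, hcd, hcp, -⟩ := exists_farther hT hv hvu
    rwa [farther_unique hT h2 hvm hadj hc h hcd]

/-- Two distinct legs meet only in `m`: following the second leg from a common vertex outwards
would put its leaf `u'` on the first leg. -/
lemma not_onPath_of_onPath {V : Type*} {T : SimpleGraph V} (hT : T.IsTree) {u u' m : V}
    (hu : IsPendant T u) (hu' : IsPendant T u') (hne : u' ≠ u) (hum : u' ≠ m)
    (hdeg : ∀ v, v ≠ m → IsPendant T v ∨ (T.neighborSet v).ncard = 2) (n : ℕ) :
    ∀ w, T.dist u' w = n → OnPath T u' m w → w ≠ m → ¬ OnPath T u m w := by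
  induction n with
  | zero =>
    intro w hw _ _ h
    rw [hT.connected.dist_eq_zero_iff] at hw
    subst hw
    exact hne (pendant_onPath hT hu' hum h)
  | succ n ih =>
    intro w hw hp hwm h
    have hwu : w ≠ u' := by
      rintro rfl
      simp at hw
    obtain ⟨c, hc, hcd, hcp, hcu⟩ := exists_farther hT hp hwu
    have hcm : c ≠ m := by
      rintro rfl
      simp at hcd
    exact ih c (by omega) hcp hcm (onPath_of_adj hT hu hdeg h hwm hc)

/-! ### The eigenvector -/

open Classical in
/-- The eigenvector: `legSeq` of the distance to `m`, shifted by one on the leg ending in `u`. -/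
noncomputable def legVec {V : Type*} (T : SimpleGraph V) (u m : V) (v : V) : ℝ :=
  if OnPath T u m v then legSeq (T.dist m v + 1) else legSeq (T.dist m v)

lemma legVec_pos {V : Type*} {T : SimpleGraph V} {u m v : V} (h : OnPath T u m v) :
    legVec T u m v = legSeq (T.dist m v + 1) := if_pos h

lemma legVec_neg {V : Type*} {T : SimpleGraph V} {u m v : V} (h : ¬ OnPath T u m v ∨ v = m) :
    legVec T u m v = legSeq (T.dist m v) := by
  rcases h with h | rfl
  · exact if_neg h
  · rw [legVec_pos (onPath_end T u v)]
    simp [legSeq]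

/-- Let `T` be a tree with exactly three pendant vertices
`u₁, u₂, u₃` and a major vertex `m` such that `d(u₁,m) ≡ 0`, `d(u₂,m) ≡ 2` and
`d(u₃,m) ≡ 0 (mod 3)`. Then there exists an eigenvector `x` of the Laplacian matrix
`L(T)` for the eigenvalue `1` such that for every `k ∈ {1,2,3}` and every vertex `w` on
the path `P_{u_k,m}`, if `d(w,u_k) ≡ 1 (mod 3)` then `x w = 0`. -/
theorem stmt_11 {V : Type*} [Fintype V] (T : SimpleGraph V) (hT : T.IsTree)
    (u₁ u₂ u₃ m : V) (hdist : List.Pairwise (· ≠ ·) [u₁, u₂, u₃])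
    (h₁ : IsPendant T u₁) (h₂ : IsPendant T u₂) (h₃ : IsPendant T u₃)
    (hpend : ∀ w : V, IsPendant T w → w ∈ ({u₁, u₂, u₃} : Set V))
    (hm : IsMajor T m)
    (hd₁ : T.dist u₁ m % 3 = 0) (hd₂ : T.dist u₂ m % 3 = 2)
    (hd₃ : T.dist u₃ m % 3 = 0) :
    ∃ x : V → ℝ, x ≠ 0 ∧ lapMat T *ᵥ x = x ∧
      ∀ u ∈ ({u₁, u₂, u₃} : Set V), ∀ w : V,
        OnPath T u m w → T.dist w u % 3 = 1 → x w = 0 := by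
  classical
  simp only [List.pairwise_cons, List.mem_cons, List.not_mem_nil, or_false, forall_eq_or_imp,
    forall_eq] at hdist
  obtain ⟨⟨h12, h13⟩, h23, -⟩ := hdist
  obtain ⟨hm3, hdeg2⟩ := ncard_neighborSet_of_three_pendant hT h12 h13 h23 h₁ h₂ h₃ hpend hm
  have hdeg : ∀ v, v ≠ m → IsPendant T v ∨ (T.neighborSet v).ncard = 2 := by
    intro v hv
    by_cases hp : IsPendant T v
    · exact Or.inl hp
    · refine Or.inr (hdeg2 v hv ?_ ?_ ?_) <;> rintro rfl <;> contradiction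
  have hnm : ∀ u, IsPendant T u → u ≠ m := by
    rintro u hu rfl
    unfold IsPendant at hu
    omega
  have hcard : ∀ v, (T.neighborFinset v).card = (T.neighborSet v).ncard := fun v => by
    rw [Set.ncard_eq_toFinset_card']; rfl
  have hdis : ∀ u, (u = u₁ ∨ u = u₃) → ∀ w, OnPath T u m w → w ≠ m → ¬ OnPath T u₂ m w := by
    rintro u (rfl | rfl) w hw hwm
    · exact not_onPath_of_onPath hT h₂ h₁ h12 (hnm _ h₁) hdeg _ w rfl hw hwm
    · exact not_onPath_of_onPath hT h₂ h₃ h23.symm (hnm _ h₃) hdeg _ w rfl hw hwm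
  refine ⟨legVec T u₂ m, ?_, ?_, ?_⟩
  · intro h
    have := congrFun h m
    rw [legVec_pos (onPath_end T u₂ m)] at this
    simp [legSeq] at this
  · funext v
    rw [lapMat_mulVec_apply T _ v (T.neighborFinset v) (by simp), hcard]
    by_cases hvm : v = m
    · subst hvm
      -- Exactly one neighbour `a` of the centre lies on the leg of `u₂`.
      obtain ⟨a, ha, had⟩ := exists_closer hT (hnm _ h₂).symm
      have hone : ∀ w, T.Adj v w → T.dist v w = 1 := fun w hw => dist_eq_one_iff_adj.2 hw
      have hon : ∀ w, T.Adj v w → (OnPath T u₂ v w ↔ w = a) := by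
        intro w hw
        have hwd := hone w hw
        rw [T.dist_comm] at hwd
        unfold OnPath
        constructor
        · intro h
          exact closer_unique hT hw ha (by omega) had
        · rintro rfl
          omega
      have hmem : a ∈ T.neighborFinset v := by simpa using ha
      have hrest : ∀ w ∈ (T.neighborFinset v).erase a, legVec T u₂ v w = 1 := by
        intro w hw
        simp only [Finset.mem_erase, mem_neighborFinset] at hw
        rw [legVec_neg (Or.inl (fun h => hw.1 ((hon w hw.2).1 h))), hone w hw.2]
        simp [legSeq]
      rw [← Finset.add_sum_erase _ _ hmem, Finset.sum_congr rfl hrest, Finset.sum_const,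
        Finset.card_erase_of_mem hmem, hcard, hm3, legVec_pos ((hon a ha).2 rfl), hone a ha,
        legVec_pos (onPath_end T u₂ v)]
      norm_num [legSeq]
    · obtain ⟨p, hp, hpd⟩ := exists_closer hT hvm
      have hback : ∀ w, T.Adj v w → w ≠ m → ¬ OnPath T u₂ m v → ¬ OnPath T u₂ m w :=
        fun w hw hwm h h' => h (onPath_of_adj hT h₂ hdeg h' hwm hw.symm)
      rcases hdeg v hvm with hpv | h2
      · have hN : T.neighborFinset v = {p} := by
          ext w
          simp only [mem_neighborFinset, Finset.mem_singleton]
          exact ⟨fun h => pendant_unique hpv h hp, fun h => h ▸ hp⟩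
        have hp0 : legVec T u₂ m p = 0 := by
          have hv := hpend v hpv
          simp only [Set.mem_insert_iff, Set.mem_singleton_iff] at hv
          by_cases hv2 : v = u₂
          · have hpon : OnPath T u₂ m p := onPath_closer hT (hv2 ▸ onPath_start T u₂ m) hp hpd
            rw [legVec_pos hpon, ← hpd]
            apply legSeq_eq_zero
            rw [hv2, T.dist_comm]
            exact hd₂
          · have hv13 : v = u₁ ∨ v = u₃ := by tauto
            have hnon := hdis v hv13 v (onPath_start T v m) hvm
            have hd : T.dist m v % 3 = 0 := by
              rw [T.dist_comm]
              rcases hv13 with rfl | rfl <;> assumption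
            rw [legVec_neg]
            · apply legSeq_eq_zero
              omega
            · by_cases hpm : p = m
              · exact Or.inr hpm
              · exact Or.inl (hback p hp hpm hnon)
        unfold IsPendant at hpv
        rw [hN, Finset.sum_singleton, hp0, hpv]
        simp
      · obtain ⟨c, hcm, hcp⟩ : ∃ c ∈ T.neighborFinset v, c ≠ p :=
          Finset.exists_mem_ne (by rw [hcard]; omega) p
        have hc : T.Adj v c := by simpa using hcm
        have hcd : T.dist m c = T.dist m v + 1 :=
          (hT.dist_eq_dist_add_one_of_adj m hc).resolve_left
            (fun h => hcp (closer_unique hT hc hp h hpd))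
        have hN : {p, c} = T.neighborFinset v := by
          apply Finset.eq_of_subset_of_card_le
          · intro w hw
            simp only [Finset.mem_insert, Finset.mem_singleton] at hw
            rcases hw with rfl | rfl <;> simpa
          · rw [hcard, h2, Finset.card_pair hcp.symm]
        have hcne : c ≠ m := by
          rintro rfl
          simp at hcd
        rw [← hN, Finset.sum_pair hcp.symm, h2]
        have key : legVec T u₂ m p + legVec T u₂ m c = legVec T u₂ m v := by
          by_cases hv : OnPath T u₂ m v
          · rw [legVec_pos hv, legVec_pos (onPath_of_adj hT h₂ hdeg hv hvm hp),
              legVec_pos (onPath_of_adj hT h₂ hdeg hv hvm hc), hcd, hpd]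
            exact legSeq_rec _
          · rw [legVec_neg (Or.inl hv), legVec_neg (Or.inl (hback c hc hcne hv)), legVec_neg, hcd,
              hpd]
            · exact legSeq_rec _
            · by_cases hpm : p = m
              · exact Or.inr hpm
              · exact Or.inl (hback p hp hpm hv)
        push_cast
        linarith
  · intro u hu w hw hmod
    simp only [Set.mem_insert_iff, Set.mem_singleton_iff] at hu
    have hw' : T.dist w u + T.dist m w = T.dist u m := by
      rw [T.dist_comm (u := w), T.dist_comm (u := m)]
      exact hw
    by_cases hu2 : u = u₂
    · subst hu2
      rw [legVec_pos hw]
      apply legSeq_eq_zero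
      omega
    · have hu13 : u = u₁ ∨ u = u₃ := by tauto
      have hd : T.dist u m % 3 = 0 := by
        rcases hu13 with rfl | rfl <;> assumption
      have hwm : w ≠ m := by
        rintro rfl
        rw [T.dist_comm] at hmod
        omega
      rw [legVec_neg (Or.inl (hdis u hu13 w hw hwm))]
      apply legSeq_eq_zero
      omega
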